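/- Let w(x) = log(1 - tanh²(x/√2)). Then the function x ↦ x·w'(x) is strictly decreasing on (0,∞); equivalently, w'(x) - x·e^{w(x)} < 0 for all x > 0. -/

import Mathlib

noncomputable def w (x : ℝ) : ℝ := Real.log (1 - Real.tanh (x / Real.sqrt 2) ^ 2)

/-!
Since `tanh' = 1 - tanh²`, the function `w` has `w' x = -√2 tanh (x / √2)` and solves Liouville's
equation `w'' = -exp w`. Hence `(x w')' = w' + x w'' = w' - x exp w`, which is negative for `x > 0`
because `w' < 0` there.
-/

theorem tanh_pos {x : ℝ} (hx : 0 < x) : 0 < Real.tanh x := by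
  rw [Real.tanh_eq_sinh_div_cosh]
  exact div_pos (Real.sinh_pos_iff.2 hx) (Real.cosh_pos x)

theorem hasDerivAt_tanh (x : ℝ) : HasDerivAt Real.tanh (1 - Real.tanh x ^ 2) x := by
  have hcosh : Real.cosh x ≠ 0 := (Real.cosh_pos x).ne'
  have hquot := (Real.hasDerivAt_sinh x).fun_div (Real.hasDerivAt_cosh x) hcosh
  simp only [← Real.tanh_eq_sinh_div_cosh] at hquot
  refine hquot.congr_deriv ?_
  rw [Real.tanh_eq_sinh_div_cosh]
  field_simp

theorem hasDerivAt_tanh_div_const (c x : ℝ) :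
    HasDerivAt (fun y => Real.tanh (y / c)) ((1 - Real.tanh (x / c) ^ 2) / c) x := by
  rw [← mul_one_div]
  exact (hasDerivAt_tanh (x / c)).comp x ((hasDerivAt_id' x).div_const c)

theorem one_sub_tanh_sq_pos (x : ℝ) : 0 < 1 - Real.tanh x ^ 2 :=
  sub_pos.2 (Real.tanh_sq_lt_one x)

theorem exp_w (x : ℝ) : Real.exp (w x) = 1 - Real.tanh (x / √2) ^ 2 :=
  Real.exp_log (one_sub_tanh_sq_pos (x / √2))

theorem hasDerivAt_w (x : ℝ) : HasDerivAt w (-(√2 * Real.tanh (x / √2))) x := by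
  have hne : 1 - Real.tanh (x / √2) ^ 2 ≠ 0 := (one_sub_tanh_sq_pos (x / √2)).ne'
  have hlog := (((hasDerivAt_tanh_div_const √2 x).fun_pow 2).const_sub 1).log hne
  refine hlog.congr_deriv ?_
  field_simp
  simp

theorem deriv_w : deriv w = fun x => -(√2 * Real.tanh (x / √2)) :=
  funext fun x => (hasDerivAt_w x).deriv

theorem deriv_w_neg {x : ℝ} (hx : 0 < x) : deriv w x < 0 := by
  have htanh : 0 < Real.tanh (x / √2) := tanh_pos (by positivity)
  rw [deriv_w, neg_lt_zero]
  positivity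

theorem hasDerivAt_deriv_w (x : ℝ) : HasDerivAt (deriv w) (-Real.exp (w x)) x := by
  rw [deriv_w, exp_w]
  refine ((hasDerivAt_tanh_div_const √2 x).const_mul √2).fun_neg.congr_deriv ?_
  field_simp

theorem hasDerivAt_mul_deriv_w (x : ℝ) :
    HasDerivAt (fun y => y * deriv w y) (deriv w x - x * Real.exp (w x)) x :=
  ((hasDerivAt_id' x).fun_mul (hasDerivAt_deriv_w x)).congr_deriv (by ring)

theorem stmt_8 :
    StrictAntiOn (fun x : ℝ => x * deriv w x) (Set.Ioi 0) ∧
    (∀ x : ℝ, 0 < x → deriv w x - x * Real.exp (w x) < 0) := by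
  have hneg (x : ℝ) (hx : 0 < x) : deriv w x - x * Real.exp (w x) < 0 :=
    sub_neg.2 ((deriv_w_neg hx).trans (mul_pos hx (Real.exp_pos (w x))))
  have hcont : ContinuousOn (fun x : ℝ => x * deriv w x) (Set.Ioi 0) :=
    fun x _ => (hasDerivAt_mul_deriv_w x).continuousAt.continuousWithinAt
  refine ⟨strictAntiOn_of_deriv_neg (convex_Ioi 0) hcont fun x hx => ?_, hneg⟩
  rw [(hasDerivAt_mul_deriv_w x).deriv]
  exact hneg x (interior_subset hx)
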